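/- Let A, B, C be three affinely independent points in the Euclidean plane and let F be a point that minimizes P ↦ dist(P,A) + dist(P,B) + dist(P,C) and satisfies F ≠ A, F ≠ B, F ≠ C. Then the three angles at F satisfy ∠AFB = ∠BFC = ∠CFA = 2π/3 (Cavalieri's theorem). -/

import Mathlib

open EuclideanGeometry Real

/-!
At a point `F` other than the vertices, the gradient of `X ↦ dist X A` is the unit vector from `A`
to `F`. Hence at a local minimum of the sum of distances the three unit vectors from `F` to `A`,
`B`, `C` add up to zero. Vectors of equal length with zero sum form an equilateral triangle when
placed head to tail, so any two of them are at angle `2π/3`.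
-/

variable {V P : Type*} [NormedAddCommGroup V] [InnerProductSpace ℝ V]

theorem hasStrictFDerivAt_norm {x : V} (hx : x ≠ 0) :
    HasStrictFDerivAt (fun y : V ↦ ‖y‖) (innerSL ℝ (NormedSpace.normalize x)) x := by
  have hsqrt := (hasStrictFDerivAt_norm_sq x).sqrt (by simpa using hx)
  simp only [sqrt_sq (norm_nonneg _)] at hsqrt
  convert! hsqrt using 1
  ext v
  simp only [NormedSpace.normalize, map_smul, smul_apply, innerSL_apply_apply, smul_eq_mul,
    nsmul_eq_mul, Nat.cast_ofNat]
  ring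

theorem inner_eq_neg_sq_norm_div_two_of_add_add_eq_zero {a b c : V} (hab : ‖a‖ = ‖b‖)
    (hac : ‖a‖ = ‖c‖) (hsum : a + b + c = 0) : inner ℝ a b = -(‖a‖ ^ 2 / 2) := by
  have hnorm : ‖a + b‖ = ‖a‖ := by rw [eq_neg_of_add_eq_zero_left hsum, norm_neg, hac]
  have hexpand := norm_add_sq_real a b
  rw [hnorm, ← hab] at hexpand
  linarith

theorem cos_two_pi_div_three : cos (2 * π / 3) = -(1 / 2) := by
  rw [show 2 * π / 3 = π - π / 3 by ring, cos_pi_sub, cos_pi_div_three]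

theorem angle_eq_two_pi_div_three_of_add_add_eq_zero {a b c : V} (ha : a ≠ 0) (hab : ‖a‖ = ‖b‖)
    (hac : ‖a‖ = ‖c‖) (hsum : a + b + c = 0) : InnerProductGeometry.angle a b = 2 * π / 3 := by
  refine injOn_cos ⟨InnerProductGeometry.angle_nonneg a b, InnerProductGeometry.angle_le_pi a b⟩
    ⟨by positivity, by linarith [pi_pos]⟩ ?_
  have hnorm : ‖a‖ ≠ 0 := norm_ne_zero_iff.mpr ha
  rw [InnerProductGeometry.cos_angle, ← hab, cos_two_pi_div_three,
    inner_eq_neg_sq_norm_div_two_of_add_add_eq_zero hab hac hsum]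
  field_simp

theorem angle_eq_two_pi_div_three_of_normalize_add_add_eq_zero {a b c : V} (ha : a ≠ 0)
    (hb : b ≠ 0) (hc : c ≠ 0)
    (hsum : NormedSpace.normalize a + NormedSpace.normalize b + NormedSpace.normalize c = 0) :
    InnerProductGeometry.angle a b = 2 * π / 3 := by
  rw [← InnerProductGeometry.angle_normalize_left, ← InnerProductGeometry.angle_normalize_right]
  refine angle_eq_two_pi_div_three_of_add_add_eq_zero ?_ ?_ ?_ hsum <;>
    simp [NormedSpace.norm_normalize, ha, hb, hc]

variable [MetricSpace P] [NormedAddTorsor V P]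

theorem hasStrictFDerivAt_dist_vadd {p q : P} (hpq : p ≠ q) :
    HasStrictFDerivAt (fun v : V ↦ dist (v +ᵥ p) q)
      (innerSL ℝ (NormedSpace.normalize (p -ᵥ q))) 0 := by
  simp only [dist_eq_norm_vsub V, vadd_vsub_assoc]
  have hne : 0 + (p -ᵥ q) ≠ 0 := by simpa using hpq
  simpa using! (hasStrictFDerivAt_norm hne).comp 0 ((hasStrictFDerivAt_id 0).add_const (p -ᵥ q))

theorem sum_normalize_vsub_eq_zero_of_isLocalMin_sum_dist {ι : Type*} {s : Finset ι} {A : ι → P}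
    {F : P} (hF : IsLocalMin (fun X ↦ ∑ i ∈ s, dist X (A i)) F) (hA : ∀ i ∈ s, F ≠ A i) :
    ∑ i ∈ s, NormedSpace.normalize (A i -ᵥ F) = 0 := by
  have hmin : IsLocalMin (fun v : V ↦ ∑ i ∈ s, dist (v +ᵥ F) (A i)) 0 :=
    IsLocalMin.comp_continuous (f := fun X ↦ ∑ i ∈ s, dist X (A i)) (g := fun v : V ↦ v +ᵥ F)
      (by simpa using hF) (by fun_prop)
  have hderiv : HasFDerivAt (fun v : V ↦ ∑ i ∈ s, dist (v +ᵥ F) (A i))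
      (∑ i ∈ s, innerSL ℝ (NormedSpace.normalize (F -ᵥ A i))) 0 :=
    HasFDerivAt.fun_sum fun i hi ↦ (hasStrictFDerivAt_dist_vadd (hA i hi)).hasFDerivAt
  have hgrad : ∑ i ∈ s, NormedSpace.normalize (F -ᵥ A i) = 0 := by
    rw [← (innerSL_inj (𝕜 := ℝ)), map_sum, map_zero, hmin.hasFDerivAt_eq_zero hderiv]
  rw [← neg_eq_zero, ← Finset.sum_neg_distrib, ← hgrad]
  simp only [← NormedSpace.normalize_neg, neg_vsub_eq_vsub_rev]

theorem fermat_point_angles_general {A B C F : P}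
    (hF : IsLocalMin (fun X ↦ dist X A + dist X B + dist X C) F)
    (hFA : F ≠ A) (hFB : F ≠ B) (hFC : F ≠ C) :
    ∠ A F B = 2 * π / 3 ∧ ∠ B F C = 2 * π / 3 ∧ ∠ C F A = 2 * π / 3 := by
  have hsum : NormedSpace.normalize (A -ᵥ F) + NormedSpace.normalize (B -ᵥ F) +
      NormedSpace.normalize (C -ᵥ F) = 0 := by
    simpa [Fin.sum_univ_three] using sum_normalize_vsub_eq_zero_of_isLocalMin_sum_dist
      (s := Finset.univ) (A := ![A, B, C]) (F := F) (by simpa [Fin.sum_univ_three] using hF)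
      (by simp [Fin.forall_fin_succ, hFA, hFB, hFC])
  have hA := vsub_ne_zero.mpr hFA.symm
  have hB := vsub_ne_zero.mpr hFB.symm
  have hC := vsub_ne_zero.mpr hFC.symm
  exact ⟨angle_eq_two_pi_div_three_of_normalize_add_add_eq_zero hA hB hC hsum,
    angle_eq_two_pi_div_three_of_normalize_add_add_eq_zero hB hC hA
      (by rw [add_comm, ← add_assoc, hsum]),
    angle_eq_two_pi_div_three_of_normalize_add_add_eq_zero hC hA hB
      (by rw [add_assoc, add_comm, hsum])⟩

/-- Cavalieri's theorem: if `F` minimizes the sum of distances to the vertices of a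
nondegenerate triangle `ABC` and is distinct from each vertex, then the three angles
at `F` are all equal to `120°`. -/
theorem fermat_point_angles
    (A B C F : EuclideanSpace ℝ (Fin 2))
    (hABC : AffineIndependent ℝ ![A, B, C])
    (hF : ∀ P : EuclideanSpace ℝ (Fin 2),
      dist F A + dist F B + dist F C ≤ dist P A + dist P B + dist P C)
    (hFA : F ≠ A) (hFB : F ≠ B) (hFC : F ≠ C) :
    ∠ A F B = 2 * π / 3 ∧ ∠ B F C = 2 * π / 3 ∧ ∠ C F A = 2 * π / 3 :=
  fermat_point_angles_general (Filter.Eventually.of_forall hF) hFA hFB hFC
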